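/- The linear subspace of 7×7 real matrices consisting of all skew-symmetric matrices A satisfying Σ_{j,k=1}^{7} ε_{ijk} A_{jk} = 0 for every i ∈ {1,…,7} has dimension 14. -/

import Mathlib

/-!
`𝔤₂` is the kernel of `A ↦ ⟨A⟩` on the space `𝔰𝔬(7)` of skew-symmetric matrices, which has dimension
`7.choose 2 = 21`. The contraction identity `Σ_{j,k} ε_{ijk} ε_{ljk} = 6 δ_{il}` gives
`⟨[v]⟩ = 6 v`, and `[v]` is skew-symmetric, so this map is onto `ℝ⁷` and its kernel has
dimension `21 - 7 = 14`.
-/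

open scoped BigOperators Matrix

noncomputable section

namespace G2

/-- The standard basis vector `e i` of `ℝ⁷`. -/
def e (i : Fin 7) : Fin 7 → ℝ := fun j => if j = i then 1 else 0

/-- The 3-form `e^a ∧ e^b ∧ e^c` (determinant convention), evaluated on `(x, y, z)`. -/
def w3 (a b c : Fin 7) (x y z : Fin 7 → ℝ) : ℝ :=
  x a * (y b * z c - y c * z b) - x b * (y a * z c - y c * z a)
    + x c * (y a * z b - y b * z a)

/-- The 4-form `e^a ∧ e^b ∧ e^c ∧ e^d`, evaluated on `(x, y, z, w)`. -/
def w4 (a b c d : Fin 7) (x y z w : Fin 7 → ℝ) : ℝ :=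
  Matrix.det !![x a, x b, x c, x d; y a, y b, y c, y d;
                z a, z b, z c, z d; w a, w b, w c, w d]

/-- The fundamental `G₂` 3-form
`φ = e^{123}+e^{145}+e^{167}+e^{246}-e^{257}-e^{347}-e^{356}` (indices shifted to start at 0),
as a trilinear alternating function of three vectors. -/
def phi (x y z : Fin 7 → ℝ) : ℝ :=
  w3 0 1 2 x y z + w3 0 3 4 x y z + w3 0 5 6 x y z + w3 1 3 5 x y z
    - w3 1 4 6 x y z - w3 2 3 6 x y z - w3 2 4 5 x y z

/-- The 4-form `ψ = *φ = e^{4567}+e^{2367}+e^{2345}+e^{1357}-e^{1346}-e^{1256}-e^{1247}`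
(indices shifted to start at 0), as a function of four vectors. -/
def psi (x y z w : Fin 7 → ℝ) : ℝ :=
  w4 3 4 5 6 x y z w + w4 1 2 5 6 x y z w + w4 1 2 3 4 x y z w + w4 0 2 4 6 x y z w
    - w4 0 2 3 5 x y z w - w4 0 1 4 5 x y z w - w4 0 1 3 6 x y z w

/-- `ε_{ijk} = φ(e_i, e_j, e_k)`. -/
def eps (i j k : Fin 7) : ℝ := phi (e i) (e j) (e k)

/-- `ε_{ijkl} = ψ(e_i, e_j, e_k, e_l)`. -/
def eps4 (i j k l : Fin 7) : ℝ := psi (e i) (e j) (e k) (e l)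

/-- The volume form `e^1 ∧ ⋯ ∧ e^7`, evaluated on a 7-tuple of vectors. -/
def vol (v : Fin 7 → (Fin 7 → ℝ)) : ℝ := Matrix.det (Matrix.of fun i j => v i j)

/-- The matrix `[v]` with `[v]_{ij} = Σ_k ε_{ijk} v_k`. -/
def bracket (v : Fin 7 → ℝ) : Matrix (Fin 7) (Fin 7) ℝ :=
  Matrix.of fun i j => ∑ k : Fin 7, eps i j k * v k

/-- The vector `⟨A⟩` with `⟨A⟩_i = Σ_{j,k} ε_{ijk} A_{jk}`. -/
def angle (A : Matrix (Fin 7) (Fin 7) ℝ) : Fin 7 → ℝ :=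
  fun i => ∑ j : Fin 7, ∑ k : Fin 7, eps i j k * A j k

/-- Wedge product of two 2-forms (determinant convention), evaluated on four vectors. -/
def wedge22 (A B : (Fin 7 → ℝ) → (Fin 7 → ℝ) → ℝ) (v : Fin 4 → (Fin 7 → ℝ)) : ℝ :=
  (1 / 4 : ℝ) * ∑ σ : Equiv.Perm (Fin 4),
    ((Equiv.Perm.sign σ : ℤ) : ℝ) * (A (v (σ 0)) (v (σ 1)) * B (v (σ 2)) (v (σ 3)))

/-- Wedge product of three 2-forms (determinant convention), evaluated on six vectors. -/
def wedge222 (A B C : (Fin 7 → ℝ) → (Fin 7 → ℝ) → ℝ) (v : Fin 6 → (Fin 7 → ℝ)) : ℝ :=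
  (1 / 8 : ℝ) * ∑ σ : Equiv.Perm (Fin 6),
    ((Equiv.Perm.sign σ : ℤ) : ℝ) *
      (A (v (σ 0)) (v (σ 1)) * B (v (σ 2)) (v (σ 3)) * C (v (σ 4)) (v (σ 5)))

/-- Wedge product of two 2-forms and a 3-form (determinant convention),
evaluated on seven vectors. -/
def wedge223 (A B : (Fin 7 → ℝ) → (Fin 7 → ℝ) → ℝ)
    (C : (Fin 7 → ℝ) → (Fin 7 → ℝ) → (Fin 7 → ℝ) → ℝ)
    (v : Fin 7 → (Fin 7 → ℝ)) : ℝ :=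
  (1 / 24 : ℝ) * ∑ σ : Equiv.Perm (Fin 7),
    ((Equiv.Perm.sign σ : ℤ) : ℝ) *
      (A (v (σ 0)) (v (σ 1)) * B (v (σ 2)) (v (σ 3)) * C (v (σ 4)) (v (σ 5)) (v (σ 6)))

/-- The map `i_φ : S²(ℝ⁷)* → Λ³(ℝ⁷)*`,
`i_φ(h) = Σ_{i,j,k,l} ε_{ikl} h_{ij} e^j ∧ e^k ∧ e^l`, evaluated on `(x, y, z)`. -/
def iphi (h : Fin 7 → Fin 7 → ℝ) (x y z : Fin 7 → ℝ) : ℝ :=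
  ∑ i : Fin 7, ∑ j : Fin 7, ∑ k : Fin 7, ∑ l : Fin 7, eps i k l * h i j * w3 j k l x y z

/-- The Lie algebra `𝔤₂`: skew-symmetric `7×7` matrices `A` with
`Σ_{j,k} ε_{ijk} A_{jk} = 0` for every `i`, as a linear subspace of the `7×7` matrices. -/
def g2Alg : Submodule ℝ (Matrix (Fin 7) (Fin 7) ℝ) where
  carrier := {A | Aᵀ = -A ∧ ∀ i : Fin 7, ∑ j : Fin 7, ∑ k : Fin 7, eps i j k * A j k = 0}
  add_mem' := by
    rintro A B ⟨hA1, hA2⟩ ⟨hB1, hB2⟩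
    refine ⟨by rw [Matrix.transpose_add, hA1, hB1, neg_add], fun i => ?_⟩
    have h : ∀ j k : Fin 7, eps i j k * (A + B) j k
        = eps i j k * A j k + eps i j k * B j k := by
      intro j k; simp [Matrix.add_apply, mul_add]
    simp only [h, Finset.sum_add_distrib, hA2 i, hB2 i, add_zero]
  zero_mem' := by
    refine ⟨by simp, fun i => ?_⟩
    simp
  smul_mem' := by
    rintro c A ⟨hA1, hA2⟩
    refine ⟨by rw [Matrix.transpose_smul, hA1, smul_neg], fun i => ?_⟩
    have h : ∀ j k : Fin 7, eps i j k * (c • A) j k = c * (eps i j k * A j k) := by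
      intro j k; simp [Matrix.smul_apply, smul_eq_mul]; ring
    simp only [h, ← Finset.mul_sum, hA2 i, mul_zero]

open LieAlgebra.Orthogonal

attribute [local instance] LieRing.ofAssociativeRing

section SkewSymmetric

variable (n R : Type*) [Fintype n] [LinearOrder n] [CommRing R] [NoZeroDivisors R]
  [NeZero (2 : R)]

/-- The coordinates on the skew-symmetric matrices given by the entries above the diagonal. -/
def soEquivUpper : so n R ≃ₗ[R] ({p : n × n // p.1 < p.2} → R) where
  toFun A p := A.1 p.1.1 p.1.2
  map_add' _ _ := rfl
  map_smul' _ _ := rfl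
  invFun x :=
    let U : Matrix n n R := Matrix.of fun i j => if h : i < j then x ⟨(i, j), h⟩ else 0
    ⟨U - Uᵀ, by simp [mem_so]⟩
  left_inv := by
    rintro ⟨A, hA⟩
    have hskew (i j : n) : A j i = -A i j := congrFun₂ ((mem_so n R A).1 hA) i j
    have hdiag (i : n) : A i i = 0 := by
      have htwo : 2 * A i i = 0 := by linear_combination hskew i i
      exact (mul_eq_zero.1 htwo).resolve_left two_ne_zero
    ext i j
    rcases lt_trichotomy i j with hij | rfl | hij
    · simp [hij, hij.not_gt]
    · simp [hdiag i]
    · simp [hij, hij.not_gt, hskew j i]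
  right_inv x := by
    ext ⟨⟨i, j⟩, hij⟩
    simp [hij, hij.not_gt]

theorem finrank_so : Module.finrank R (so n R) = (Fintype.card n).choose 2 := by
  have : Nontrivial R := NeZero.nontrivial (2 : R)
  rw [(soEquivUpper n R).finrank_eq, Module.finrank_fintype_fun_eq_card, Fintype.card_subtype,
    Fintype.card_product_filter_lt]

end SkewSymmetric

theorem finrank_map_add_finrank_inf_ker {K V W : Type*} [DivisionRing K] [AddCommGroup V]
    [Module K V] [AddCommGroup W] [Module K W] (f : V →ₗ[K] W) (p : Submodule K V)
    [FiniteDimensional K p] :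
    Module.finrank K (p.map f) + Module.finrank K (p ⊓ LinearMap.ker f : Submodule K V) =
      Module.finrank K p := by
  have hker : Module.finrank K (LinearMap.ker (f.domRestrict p)) =
      Module.finrank K (p ⊓ LinearMap.ker f : Submodule K V) := by
    rw [LinearMap.ker_domRestrict, ← Submodule.map_comap_subtype, Submodule.finrank_map_subtype_eq]
  rw [← hker, ← LinearMap.range_domRestrict, LinearMap.finrank_range_add_finrank_ker]

theorem phi_swap_left (x y z : Fin 7 → ℝ) : phi y x z = -phi x y z := by
  simp only [phi, w3]
  ring

theorem phi_rotate (x y z : Fin 7 → ℝ) : phi y z x = phi x y z := by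
  simp only [phi, w3]
  ring

theorem sum_phi_mul (x y v : Fin 7 → ℝ) : ∑ k, phi x y (e k) * v k = phi x y v := by
  simp only [Fin.sum_univ_seven, phi, w3, e, Fin.reduceEq, ↓reduceIte]
  ring

theorem phi_apply_e_e (x : Fin 7 → ℝ) (j k : Fin 7) :
    phi x (e j) (e k) =
      !![   0,  x 2, -x 1,  x 4, -x 3,  x 6, -x 5;
         -x 2,    0,  x 0,  x 5, -x 6, -x 3,  x 4;
          x 1, -x 0,    0, -x 6, -x 5,  x 4,  x 3;
         -x 4, -x 5,  x 6,    0,  x 0,  x 1, -x 2;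
          x 3,  x 6,  x 5, -x 0,    0, -x 2, -x 1;
         -x 6,  x 3, -x 4, -x 1,  x 2,    0,  x 0;
          x 5, -x 4, -x 3,  x 2,  x 1, -x 0,    0] j k := by
  fin_cases j <;> fin_cases k <;> simp [phi, w3, e]

-- In the matrix of `x ⌟ φ` each coordinate of `x` fills six entries, up to sign.
theorem sum_phi_mul_phi (x y : Fin 7 → ℝ) :
    ∑ j, ∑ k, phi x (e j) (e k) * phi y (e j) (e k) = 6 * (x ⬝ᵥ y) := by
  simp only [phi_apply_e_e, Fin.sum_univ_seven, dotProduct, Matrix.of_apply, Matrix.cons_val]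
  ring

theorem bracket_apply (v : Fin 7 → ℝ) (i j : Fin 7) : bracket v i j = phi (e i) (e j) v :=
  sum_phi_mul (e i) (e j) v

theorem bracket_mem_so (v : Fin 7 → ℝ) : bracket v ∈ so (Fin 7) ℝ := by
  rw [mem_so]
  ext i j
  simp only [Matrix.transpose_apply, Matrix.neg_apply, bracket_apply]
  exact phi_swap_left (e i) (e j) v

theorem angle_bracket (v : Fin 7 → ℝ) : angle (bracket v) = (6 : ℝ) • v := by
  ext i
  calc angle (bracket v) i = ∑ j, ∑ k, phi (e i) (e j) (e k) * phi v (e j) (e k) := by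
        simp only [angle, eps, bracket_apply, phi_rotate v]
    _ = 6 * (e i ⬝ᵥ v) := sum_phi_mul_phi (e i) v
    _ = ((6 : ℝ) • v) i := by simp [dotProduct, e]

/-- The linear map `A ↦ ⟨A⟩`, bundled so that `𝔤₂` is its kernel on the skew-symmetric matrices. -/
def angleLinear : Matrix (Fin 7) (Fin 7) ℝ →ₗ[ℝ] (Fin 7 → ℝ) where
  toFun := angle
  map_add' A B := by
    ext i
    simp [angle, mul_add, Finset.sum_add_distrib]
  map_smul' c A := by
    ext i
    simp [angle, Finset.mul_sum, mul_left_comm]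

theorem map_angleLinear_so_eq_top : (so (Fin 7) ℝ).toSubmodule.map angleLinear = ⊤ := by
  refine eq_top_iff.2 fun v _ => ⟨bracket ((6⁻¹ : ℝ) • v), bracket_mem_so _, ?_⟩
  exact (angle_bracket _).trans (smul_inv_smul₀ (by norm_num) v)

theorem g2Alg_eq_so_inf_ker_angleLinear :
    g2Alg = (so (Fin 7) ℝ).toSubmodule ⊓ LinearMap.ker angleLinear := by
  ext A
  exact and_congr (mem_so (Fin 7) ℝ A).symm funext_iff.symm

/-- the subspace `𝔤₂` has dimension `14`. -/
theorem g2Alg_finrank : Module.finrank ℝ g2Alg = 14 := by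
  have hrank := finrank_map_add_finrank_inf_ker angleLinear (so (Fin 7) ℝ).toSubmodule
  have hso : Module.finrank ℝ (so (Fin 7) ℝ).toSubmodule = 21 := finrank_so (Fin 7) ℝ
  rw [map_angleLinear_so_eq_top, ← g2Alg_eq_so_inf_ker_angleLinear, hso, finrank_top,
    Module.finrank_fin_fun] at hrank
  lia

end G2

end
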